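/- arXiv:2506.08590 — 2 statements merged into one kernel-verified Lean document; each statement's English description precedes it below -/
import Mathlib

section
/- Let H be a complex Hilbert space, A a bounded self-adjoint operator on H with A ≥ c·Id for some c > 0, ψ ∈ H and α ∈ ℝ such that T_α := A + α|ψ⟩⟨ψ| satisfies T_α ≥ c'·Id for some c' > 0. Then for every t ≥ 0 one has 1 + α⟨ψ, (A + t^{4/3})⁻¹ψ⟩ > 0, the operator-valued integrand below is Bochner integrable on (0, ∞), and T_α^{-1/4} = A^{-1/4} − (2√2·α/(3π)) ∫₀^∞ (1 / (1 + α⟨ψ, (A + t^{4/3})⁻¹ψ⟩)) · |(A + t^{4/3})⁻¹ψ⟩⟨(A + t^{4/3})⁻¹ψ| dt. -/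
open scoped InnerProductSpace
open MeasureTheory
set_option synthInstance.maxHeartbeats 1000000
set_option maxHeartbeats 1000000

/-- The rank-one operator `|ψ⟩⟨ψ| : x ↦ ⟨ψ, x⟩ψ`. -/
noncomputable def rankOne {H : Type*} [NormedAddCommGroup H] [InnerProductSpace ℂ H]
    (ψ : H) : H →L[ℂ] H := (innerSL ℂ ψ).smulRight ψ

/-! For `p > 1` and `x > 0`, writing `(x + tᵖ)⁻¹ = ∫₀^∞ exp (-(x + tᵖ) v) dv`, integrating first in
`t` and using Euler's reflection formula gives
`x ^ (1 / p - 1) = (p sin (π / p) / π) ∫₀^∞ (x + tᵖ)⁻¹ dt`.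
The continuous functional calculus turns this into a formula for powers of strictly positive
elements `a`, `b` of a C⋆-algebra, and the second resolvent identity
`(a + s)⁻¹ - (b + s)⁻¹ = (b + s)⁻¹ (b - a) (a + s)⁻¹` into one for the difference of their powers.

For `T = A + α |ψ⟩⟨ψ|` the resolvent product is evaluated by the Sherman–Morrison formula, whose
denominator `1 + α ⟨ψ, A⁻¹ ψ⟩` is positive: for `α ≥ 0` because `A⁻¹ ≥ 0`, and for `α ≤ 0` because
`(1 + α ⟨ψ, A⁻¹ ψ⟩) (1 - α ⟨ψ, T⁻¹ ψ⟩) = 1` with a positive second factor.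
The inverse fourth root is the case `p = 4 / 3`. -/

section ScalarIntegral

open Real Set

variable {p x : ℝ}

lemma exp_neg_add_mul (x y v : ℝ) : exp (-((x + y) * v)) = exp (-(x * v)) * exp (-v * y) := by
  rw [← exp_add]
  ring_nf

lemma integrableOn_exp_neg_add_rpow_mul (hp : 0 < p) {v : ℝ} (hv : 0 < v) :
    IntegrableOn (fun t : ℝ ↦ exp (-((x + t ^ p) * v))) (Ioi 0) := by
  simp only [exp_neg_add_mul]
  refine Integrable.const_mul ?_ _
  simpa only [rpow_zero, one_mul, IntegrableOn] using
    integrableOn_rpow_mul_exp_neg_mul_rpow neg_one_lt_zero hp hv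

lemma integral_exp_neg_add_rpow_mul (hp : 0 < p) {v : ℝ} (hv : 0 < v) :
    ∫ t in Ioi (0 : ℝ), exp (-((x + t ^ p) * v)) =
      Gamma (1 / p + 1) * (v ^ (1 - 1 / p - 1) * exp (-(x * v))) := by
  simp only [exp_neg_add_mul]
  rw [integral_const_mul, integral_exp_neg_mul_rpow hp hv]
  ring_nf

lemma integrable_exp_neg_add_rpow_mul (hp : 1 < p) (hx : 0 < x) :
    Integrable (fun z : ℝ × ℝ ↦ exp (-((x + z.1 ^ p) * z.2)))
      ((volume.restrict (Ioi 0)).prod (volume.restrict (Ioi 0))) := by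
  have hp₀ : 0 < p := one_pos.trans hp
  refine (integrable_prod_iff' (by fun_prop)).2 ⟨?_, ?_⟩
  · filter_upwards [ae_restrict_mem measurableSet_Ioi] with v hv
    exact integrableOn_exp_neg_add_rpow_mul hp₀ hv
  · have hs : -1 < 1 - 1 / p - 1 := by linarith [(div_lt_one hp₀).2 hp]
    have hGamma :=
      (integrableOn_rpow_mul_exp_neg_mul_rpow hs one_pos hx).const_mul (Gamma (1 / p + 1))
    refine IntegrableOn.congr_fun hGamma (fun v hv ↦ ?_) measurableSet_Ioi
    simp only [norm_eq_abs, abs_exp, integral_exp_neg_add_rpow_mul hp₀ (mem_Ioi.1 hv), rpow_one,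
      neg_mul]

lemma integral_exp_neg_mul_Ioi {y : ℝ} (hy : 0 < y) :
    ∫ v in Ioi (0 : ℝ), exp (-(y * v)) = y⁻¹ := by
  simpa using integral_exp_mul_Ioi (neg_lt_zero.2 hy) 0

lemma integrableOn_inv_add_rpow (hp : 1 < p) (hx : 0 < x) :
    IntegrableOn (fun t : ℝ ↦ (x + t ^ p)⁻¹) (Ioi 0) :=
  IntegrableOn.congr_fun (integrable_exp_neg_add_rpow_mul hp hx).integral_prod_left
    (fun _ ht ↦ integral_exp_neg_mul_Ioi (add_pos hx (rpow_pos_of_pos ht p))) measurableSet_Ioi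

lemma Gamma_one_div_add_one_mul_Gamma_one_sub_one_div (hp : p ≠ 0) :
    Gamma (1 / p + 1) * Gamma (1 - 1 / p) = π / (p * sin (π / p)) := by
  rw [Gamma_add_one (one_div_ne_zero hp), mul_assoc, Gamma_mul_Gamma_one_sub, mul_one_div,
    div_mul_div_comm, one_mul]

lemma integral_inv_add_rpow (hp : 1 < p) (hx : 0 < x) :
    ∫ t in Ioi (0 : ℝ), (x + t ^ p)⁻¹ = π / (p * sin (π / p)) * x ^ (1 / p - 1) := by
  have hp₀ : 0 < p := one_pos.trans hp
  calc ∫ t in Ioi (0 : ℝ), (x + t ^ p)⁻¹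
      = ∫ t in Ioi (0 : ℝ), ∫ v in Ioi (0 : ℝ), exp (-((x + t ^ p) * v)) :=
        setIntegral_congr_fun measurableSet_Ioi fun _ ht ↦
          (integral_exp_neg_mul_Ioi (add_pos hx (rpow_pos_of_pos ht p))).symm
    _ = ∫ v in Ioi (0 : ℝ), ∫ t in Ioi (0 : ℝ), exp (-((x + t ^ p) * v)) :=
        integral_integral_swap (integrable_exp_neg_add_rpow_mul hp hx)
    _ = ∫ v in Ioi (0 : ℝ), Gamma (1 / p + 1) * (v ^ (1 - 1 / p - 1) * exp (-(x * v))) :=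
        setIntegral_congr_fun measurableSet_Ioi fun _ hv ↦ integral_exp_neg_add_rpow_mul hp₀ hv
    _ = Gamma (1 / p + 1) * ((1 / x) ^ (1 - 1 / p) * Gamma (1 - 1 / p)) := by
        rw [integral_const_mul,
          integral_rpow_mul_exp_neg_mul_Ioi (sub_pos.2 ((div_lt_one hp₀).2 hp)) hx]
    _ = π / (p * sin (π / p)) * x ^ (1 / p - 1) := by
        rw [← Gamma_one_div_add_one_mul_Gamma_one_sub_one_div hp₀.ne', one_div x,
          inv_rpow hx.le, ← rpow_neg hx.le, neg_sub]
        ring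

lemma four_thirds_mul_sin_div_pi : 4 / 3 * sin (π / (4 / 3)) / π = 2 * √2 / (3 * π) := by
  rw [show π / (4 / 3) = π - π / 4 by ring, sin_pi_sub, sin_pi_div_four]
  ring

lemma continuousOn_uncurry_inv_add_rpow {S : Set ℝ} (hS : ∀ x ∈ S, 0 < x) :
    ContinuousOn (Function.uncurry fun t x : ℝ ↦ (x + t ^ p)⁻¹) (Ioi 0 ×ˢ S) := by
  refine ContinuousOn.inv₀ (continuousOn_snd.add ?_) fun z hz ↦
    (add_pos (hS z.2 hz.2) (rpow_pos_of_pos hz.1 p)).ne'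
  exact continuousOn_fst.rpow_const fun z hz ↦ .inl (mem_Ioi.1 hz.1).ne'

lemma ae_norm_inv_add_rpow_le {c : ℝ} (hc : 0 < c) {S : Set ℝ} (hS : ∀ x ∈ S, c ≤ x) :
    ∀ᵐ t ∂volume.restrict (Ioi (0 : ℝ)), ∀ x ∈ S, ‖(x + t ^ p)⁻¹‖ ≤ (c + t ^ p)⁻¹ := by
  filter_upwards [ae_restrict_mem measurableSet_Ioi] with t ht x hx
  have hct : 0 < c + t ^ p := add_pos hc (rpow_pos_of_pos ht p)
  have hle : c + t ^ p ≤ x + t ^ p := by gcongr; exact hS x hx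
  rw [norm_inv, norm_of_nonneg (hct.trans_le hle).le]
  exact inv_anti₀ hct hle

end ScalarIntegral

section CStarAlgebra

open Real Set
open scoped Ring

variable {A : Type*} [CStarAlgebra A] [PartialOrder A] [StarOrderedRing A] {a b : A} {p s : ℝ}

lemma isStrictlyPositive_of_smul_one_le {c : ℝ} (hc : 0 < c) (h : c • 1 ≤ a) :
    IsStrictlyPositive a :=
  (isStrictlyPositive_one.smul hc).of_le h

lemma isStrictlyPositive_add_smul_one (ha : IsStrictlyPositive a) (hs : 0 ≤ s) :
    IsStrictlyPositive (a + s • 1) :=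
  ha.add_nonneg (smul_nonneg hs zero_le_one)

lemma sqrt_sqrt_ringInverse (ha : IsStrictlyPositive a) :
    CFC.sqrt (CFC.sqrt a⁻¹ʳ) = a ^ (-(1 / 4) : ℝ) := by
  rw [CFC.inverse_eq_rpow_neg_one, CFC.sqrt_rpow ha.isUnit (by norm_num),
    CFC.sqrt_rpow ha.isUnit (by norm_num)]
  norm_num

lemma exists_pos_le_spectrum (ha : IsStrictlyPositive a) : ∃ c > 0, ∀ x ∈ spectrum ℝ a, c ≤ x := by
  obtain hσ | hσ := (spectrum ℝ a).eq_empty_or_nonempty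
  · exact ⟨1, one_pos, by simp [hσ]⟩
  · obtain ⟨c, hc, hmin⟩ := (spectrum.isCompact (𝕜 := ℝ) a).exists_isLeast hσ
    exact ⟨c, ha.spectrum_pos hc, hmin⟩

lemma norm_ringInverse_add_smul_one_le (ha : IsStrictlyPositive a) (hs : 0 ≤ s) :
    ‖(a + s • 1)⁻¹ʳ‖ ≤ ‖a⁻¹ʳ‖ :=
  CStarAlgebra.norm_le_norm_of_nonneg_of_le
    (isStrictlyPositive_add_smul_one ha hs).ringInverse.nonneg
    (CStarAlgebra.ringInverse_le_ringInverse (le_add_of_nonneg_right (smul_nonneg hs zero_le_one)))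

lemma ringInverse_add_smul_one_eq_cfc (ha : IsStrictlyPositive a) (hs : 0 ≤ s) :
    (a + s • 1)⁻¹ʳ = cfc (fun x : ℝ ↦ (x + s)⁻¹) a := by
  have hne : ∀ x ∈ spectrum ℝ a, x + s ≠ 0 := fun x hx ↦
    (add_pos_of_pos_of_nonneg (ha.spectrum_pos hx) hs).ne'
  rw [cfc_inv (fun x : ℝ ↦ x + s) a hne, cfc_add_const s (fun x : ℝ ↦ x) a, cfc_id' ℝ a,
    Algebra.algebraMap_eq_smul_one]

lemma ringInverse_add_rpow_eqOn_cfc (ha : IsStrictlyPositive a) (p : ℝ) :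
    EqOn (fun t : ℝ ↦ (a + t ^ p • 1)⁻¹ʳ) (fun t ↦ cfc (fun x : ℝ ↦ (x + t ^ p)⁻¹) a) (Ioi 0) :=
  fun _ ht ↦ ringInverse_add_smul_one_eq_cfc ha (rpow_nonneg (mem_Ioi.1 ht).le p)

lemma integrableOn_ringInverse_add_rpow (ha : IsStrictlyPositive a) (hp : 1 < p) :
    IntegrableOn (fun t : ℝ ↦ (a + t ^ p • 1)⁻¹ʳ) (Ioi 0) := by
  obtain ⟨c, hc, hσ⟩ := exists_pos_le_spectrum ha
  refine IntegrableOn.congr_fun ?_ (ringInverse_add_rpow_eqOn_cfc ha p).symm measurableSet_Ioi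
  exact integrableOn_cfc measurableSet_Ioi _ _ a
    (continuousOn_uncurry_inv_add_rpow fun _ ↦ ha.spectrum_pos) (ae_norm_inv_add_rpow_le hc hσ)
    (integrableOn_inv_add_rpow hp hc).hasFiniteIntegral

lemma integral_ringInverse_add_rpow (ha : IsStrictlyPositive a) (hp : 1 < p) :
    ∫ t in Ioi (0 : ℝ), (a + t ^ p • 1)⁻¹ʳ = (π / (p * sin (π / p))) • a ^ (1 / p - 1) := by
  obtain ⟨c, hc, hσ⟩ := exists_pos_le_spectrum ha
  calc ∫ t in Ioi (0 : ℝ), (a + t ^ p • 1)⁻¹ʳ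
      = ∫ t in Ioi (0 : ℝ), cfc (fun x : ℝ ↦ (x + t ^ p)⁻¹) a :=
        setIntegral_congr_fun measurableSet_Ioi (ringInverse_add_rpow_eqOn_cfc ha p)
    _ = cfc (fun x : ℝ ↦ ∫ t in Ioi (0 : ℝ), (x + t ^ p)⁻¹) a :=
        (cfc_setIntegral measurableSet_Ioi _ _ a
          (continuousOn_uncurry_inv_add_rpow fun _ ↦ ha.spectrum_pos)
          (ae_norm_inv_add_rpow_le hc hσ) (integrableOn_inv_add_rpow hp hc).hasFiniteIntegral).symm
    _ = cfc (fun x : ℝ ↦ (π / (p * sin (π / p))) • x ^ (1 / p - 1)) a :=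
        cfc_congr fun x hx ↦ integral_inv_add_rpow hp (ha.spectrum_pos hx)
    _ = (π / (p * sin (π / p))) • a ^ (1 / p - 1) := by
        rw [CFC.rpow_eq_cfc_real, cfc_smul _ (fun x : ℝ ↦ x ^ (1 / p - 1)) a
          (continuousOn_id.rpow_const fun x hx ↦ .inl (ha.spectrum_pos hx).ne')]

lemma rpow_eq_smul_integral_ringInverse (ha : IsStrictlyPositive a) (hp : 1 < p) :
    a ^ (1 / p - 1) = (p * sin (π / p) / π) • ∫ t in Ioi (0 : ℝ), (a + t ^ p • 1)⁻¹ʳ := by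
  have hp₀ : 0 < p := one_pos.trans hp
  have hsin : 0 < sin (π / p) :=
    sin_pos_of_pos_of_lt_pi (div_pos pi_pos hp₀) (div_lt_self pi_pos hp)
  rw [integral_ringInverse_add_rpow ha hp, smul_smul, div_mul_div_cancel₀ pi_ne_zero,
    div_self (mul_pos hp₀ hsin).ne', one_smul]

lemma integrableOn_ringInverse_mul_mul_ringInverse (ha : IsStrictlyPositive a)
    (hb : IsStrictlyPositive b) (hp : 1 < p) (x : A) :
    IntegrableOn (fun t : ℝ ↦ (b + t ^ p • 1)⁻¹ʳ * x * (a + t ^ p • 1)⁻¹ʳ) (Ioi 0) := by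
  refine (integrableOn_ringInverse_add_rpow ha hp).bdd_mul (c := ‖b⁻¹ʳ‖ * ‖x‖)
    ((integrableOn_ringInverse_add_rpow hb hp).aestronglyMeasurable.mul_const x) ?_
  filter_upwards [ae_restrict_mem measurableSet_Ioi] with t ht
  grw [norm_mul_le, norm_ringInverse_add_smul_one_le hb (rpow_nonneg (mem_Ioi.1 ht).le p)]

lemma ringInverse_mul_sub_mul_ringInverse (ha : IsStrictlyPositive a) (hb : IsStrictlyPositive b)
    (hs : 0 ≤ s) :
    (b + s • 1)⁻¹ʳ * (b - a) * (a + s • 1)⁻¹ʳ = (a + s • 1)⁻¹ʳ - (b + s • 1)⁻¹ʳ := by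
  have hunit : IsUnit (b + s • 1) ↔ IsUnit (a + s • 1) := iff_of_true
    (isStrictlyPositive_add_smul_one hb hs).isUnit (isStrictlyPositive_add_smul_one ha hs).isUnit
  rw [← neg_sub (b + s • 1)⁻¹ʳ, Ring.inverse_sub_inverse hunit, add_sub_add_right_eq_sub,
    ← neg_sub b a, mul_neg, neg_mul, neg_neg]

lemma rpow_eq_rpow_sub_smul_integral (ha : IsStrictlyPositive a) (hb : IsStrictlyPositive b)
    (hp : 1 < p) :
    b ^ (1 / p - 1) = a ^ (1 / p - 1) - (p * sin (π / p) / π) •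
      ∫ t in Ioi (0 : ℝ), (b + t ^ p • 1)⁻¹ʳ * (b - a) * (a + t ^ p • 1)⁻¹ʳ := by
  rw [setIntegral_congr_fun measurableSet_Ioi fun t ht ↦
      ringInverse_mul_sub_mul_ringInverse ha hb (rpow_nonneg (mem_Ioi.1 ht).le p),
    integral_sub (integrableOn_ringInverse_add_rpow ha hp)
      (integrableOn_ringInverse_add_rpow hb hp), smul_sub,
    ← rpow_eq_smul_integral_ringInverse ha hp, ← rpow_eq_smul_integral_ringInverse hb hp,
    sub_sub_cancel]

end CStarAlgebra

section RankOnePerturbation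

open scoped Ring

variable {𝕜 E : Type*} [NormedField 𝕜] [SeminormedAddCommGroup E] [NormedSpace 𝕜 E]
  {A T : E →L[𝕜] E} {f : E →L[𝕜] 𝕜} {φ : E} {α : 𝕜}

lemma one_add_apply_ringInverse_smul (hA : IsUnit A) (hT : IsUnit T)
    (h : T = A + α • f.smulRight φ) : (1 + α * f (A⁻¹ʳ φ)) • T⁻¹ʳ φ = A⁻¹ʳ φ := by
  have hTA : T⁻¹ʳ - A⁻¹ʳ = T⁻¹ʳ * (A - T) * A⁻¹ʳ := Ring.inverse_sub_inverse (iff_of_true hT hA)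
  have hφ : T⁻¹ʳ φ - A⁻¹ʳ φ = -((α * f (A⁻¹ʳ φ)) • T⁻¹ʳ φ) := by
    simpa [h, smul_smul] using DFunLike.congr_fun hTA φ
  rw [add_smul, one_smul, eq_comm, ← sub_eq_iff_eq_add', ← neg_sub, hφ, neg_neg]

lemma one_add_apply_ringInverse_mul_one_sub_apply_ringInverse (hA : IsUnit A) (hT : IsUnit T)
    (h : T = A + α • f.smulRight φ) :
    (1 + α * f (A⁻¹ʳ φ)) * (1 - α * f (T⁻¹ʳ φ)) = 1 := by
  have hf : (1 + α * f (A⁻¹ʳ φ)) * f (T⁻¹ʳ φ) = f (A⁻¹ʳ φ) := by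
    rw [← smul_eq_mul, ← map_smul, one_add_apply_ringInverse_smul hA hT h]
  linear_combination -α * hf

lemma ringInverse_mul_smulRight_mul_ringInverse (hA : IsUnit A) (hT : IsUnit T)
    (h : T = A + α • f.smulRight φ) :
    T⁻¹ʳ * f.smulRight φ * A⁻¹ʳ =
      (1 + α * f (A⁻¹ʳ φ))⁻¹ • (f ∘L A⁻¹ʳ).smulRight (A⁻¹ʳ φ) := by
  have hne : 1 + α * f (A⁻¹ʳ φ) ≠ 0 :=
    left_ne_zero_of_mul_eq_one (one_add_apply_ringInverse_mul_one_sub_apply_ringInverse hA hT h)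
  have hT_apply : T⁻¹ʳ φ = (1 + α * f (A⁻¹ʳ φ))⁻¹ • A⁻¹ʳ φ := by
    rw [eq_inv_smul_iff₀ hne, one_add_apply_ringInverse_smul hA hT h]
  ext x
  simp only [mul_apply_eq_comp, ContinuousLinearMap.smulRight_apply, map_smul,
    hT_apply, smul_apply, ContinuousLinearMap.comp_apply]
  exact smul_comm _ _ _

end RankOnePerturbation

section Hilbert

open Real Set
open scoped Ring ComplexOrder

variable {H : Type*} [NormedAddCommGroup H] [InnerProductSpace ℂ H] [CompleteSpace H]
  {A T : H →L[ℂ] H} {ψ : H} {α : ℝ}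

lemma inner_ringInverse_nonneg (hA : IsStrictlyPositive A) (ψ : H) : 0 ≤ ⟪ψ, A⁻¹ʳ ψ⟫_ℂ :=
  (ContinuousLinearMap.nonneg_iff_isPositive _ |>.1 hA.ringInverse.nonneg).inner_nonneg_right ψ

lemma one_add_mul_inner_ringInverse_pos (hA : IsStrictlyPositive A) (hT : IsStrictlyPositive T)
    (h : T = A + α • rankOne ψ) : 0 < 1 + (α : ℂ) * ⟪ψ, A⁻¹ʳ ψ⟫_ℂ := by
  have hdet : (1 + (α : ℂ) * ⟪ψ, A⁻¹ʳ ψ⟫_ℂ) * (1 - α * ⟪ψ, T⁻¹ʳ ψ⟫_ℂ) = 1 :=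
    one_add_apply_ringInverse_mul_one_sub_apply_ringInverse hA.isUnit hT.isUnit h
  obtain hα | hα := le_total 0 α
  · exact add_pos_of_pos_of_nonneg one_pos
      (mul_nonneg (mod_cast hα) (inner_ringInverse_nonneg hA ψ))
  · have hpos : 0 < 1 - (α : ℂ) * ⟪ψ, T⁻¹ʳ ψ⟫_ℂ := sub_pos_of_lt <|
      (mul_nonpos_of_nonpos_of_nonneg (mod_cast hα) (inner_ringInverse_nonneg hT ψ)).trans_lt
        one_pos
    rw [eq_inv_of_mul_eq_one_left hdet]
    exact RCLike.inv_pos.2 hpos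

lemma ringInverse_mul_rankOne_mul_ringInverse (hA : IsStrictlyPositive A)
    (hT : IsStrictlyPositive T) (h : T = A + α • rankOne ψ) :
    T⁻¹ʳ * rankOne ψ * A⁻¹ʳ =
      ((1 : ℂ) / (1 + (α : ℂ) * ⟪ψ, A⁻¹ʳ ψ⟫_ℂ)) • rankOne (A⁻¹ʳ ψ) := by
  have hadj : innerSL ℂ ψ ∘L A⁻¹ʳ = innerSL ℂ (A⁻¹ʳ ψ) := by
    rw [ContinuousLinearMap.innerSL_apply_comp, hA.ringInverse.isSelfAdjoint.adjoint_eq]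
  rw [rankOne, rankOne, one_div, ← hadj]
  exact ringInverse_mul_smulRight_mul_ringInverse hA.isUnit hT.isUnit h

theorem inv_fourth_root_rank_one_perturbation_general (hA : IsStrictlyPositive A)
    (hT : IsStrictlyPositive T) (h : T = A + α • rankOne ψ) {p : ℝ} (hp : 1 < p) :
    (∀ t : ℝ, 0 ≤ t → 0 < 1 + (α : ℂ) * ⟪ψ, (A + t ^ p • 1)⁻¹ʳ ψ⟫_ℂ) ∧
    IntegrableOn (fun t : ℝ ↦ ((1 : ℂ) / (1 + (α : ℂ) * ⟪ψ, (A + t ^ p • 1)⁻¹ʳ ψ⟫_ℂ)) •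
      rankOne ((A + t ^ p • 1)⁻¹ʳ ψ)) (Ioi 0) ∧
    T ^ (1 / p - 1) = A ^ (1 / p - 1) - (p * sin (π / p) / π * α) •
      ∫ t in Ioi (0 : ℝ), ((1 : ℂ) / (1 + (α : ℂ) * ⟪ψ, (A + t ^ p • 1)⁻¹ʳ ψ⟫_ℂ)) •
        rankOne ((A + t ^ p • 1)⁻¹ʳ ψ) := by
  have hA_add {t : ℝ} (ht : 0 ≤ t) : IsStrictlyPositive (A + t ^ p • 1) :=
    isStrictlyPositive_add_smul_one hA (rpow_nonneg ht p)
  have hT_add {t : ℝ} (ht : 0 ≤ t) : IsStrictlyPositive (T + t ^ p • 1) :=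
    isStrictlyPositive_add_smul_one hT (rpow_nonneg ht p)
  have h_add (t : ℝ) : T + t ^ p • 1 = A + t ^ p • 1 + α • rankOne ψ := by
    rw [h, add_right_comm]
  have hintegrand := fun t (ht : t ∈ Ioi (0 : ℝ)) ↦
    ringInverse_mul_rankOne_mul_ringInverse (hA_add ht.le) (hT_add ht.le) (h_add t)
  refine ⟨fun t ht ↦ one_add_mul_inner_ringInverse_pos (hA_add ht) (hT_add ht) (h_add t),
    (integrableOn_ringInverse_mul_mul_ringInverse hA hT hp (rankOne ψ)).congr_fun hintegrand
      measurableSet_Ioi, ?_⟩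
  rw [← setIntegral_congr_fun measurableSet_Ioi hintegrand, rpow_eq_rpow_sub_smul_integral hA hT hp,
    sub_eq_of_eq_add' h]
  simp only [mul_smul_comm, smul_mul_assoc, integral_smul, smul_smul]

end Hilbert

/-- Integral formula for the inverse fourth root of a rank-one perturbation:
if `A ≥ c·Id` (`c > 0`) and `T = A + α|ψ⟩⟨ψ| ≥ c'·Id` (`c' > 0`), then for every
`t ≥ 0` the scalar `1 + α⟨ψ, (A+t^{4/3})⁻¹ψ⟩` is a positive real number, the
operator-valued integrand is Bochner integrable on `(0,∞)`, and
`T^{-1/4} = A^{-1/4} − (2√2 α/(3π)) ∫₀^∞ (1/(1 + α⟨ψ,(A+t^{4/3})⁻¹ψ⟩))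
|(A+t^{4/3})⁻¹ψ⟩⟨(A+t^{4/3})⁻¹ψ| dt`, where the positive fourth root of the inverse is
the square root of the square root of the inverse. -/
theorem inv_fourth_root_rank_one_perturbation
    {H : Type*} [NormedAddCommGroup H] [InnerProductSpace ℂ H] [CompleteSpace H]
    (A : H →L[ℂ] H) (hA : IsSelfAdjoint A) (c : ℝ) (hc : 0 < c)
    (hAc : c • (1 : H →L[ℂ] H) ≤ A) (ψ : H) (α : ℝ)
    (T : H →L[ℂ] H) (hT : T = A + α • rankOne ψ)
    (c' : ℝ) (hc' : 0 < c') (hTc : c' • (1 : H →L[ℂ] H) ≤ T) :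
    (∀ t : ℝ, 0 ≤ t →
        (1 + (α : ℂ) * ⟪ψ, (Ring.inverse (A + t ^ ((4:ℝ)/3) • 1)) ψ⟫_ℂ).im = 0 ∧
        0 < (1 + (α : ℂ) * ⟪ψ, (Ring.inverse (A + t ^ ((4:ℝ)/3) • 1)) ψ⟫_ℂ).re) ∧
    IntegrableOn (fun t : ℝ =>
        ((1 : ℂ) / (1 + (α : ℂ) * ⟪ψ, (Ring.inverse (A + t ^ ((4:ℝ)/3) • 1)) ψ⟫_ℂ)) •
          rankOne ((Ring.inverse (A + t ^ ((4:ℝ)/3) • 1)) ψ)) (Set.Ioi 0) ∧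
    CFC.sqrt (CFC.sqrt (Ring.inverse T)) =
      CFC.sqrt (CFC.sqrt (Ring.inverse A)) - (2 * Real.sqrt 2 * α / (3 * Real.pi)) •
        ∫ t in Set.Ioi (0:ℝ),
          ((1 : ℂ) / (1 + (α : ℂ) * ⟪ψ, (Ring.inverse (A + t ^ ((4:ℝ)/3) • 1)) ψ⟫_ℂ)) •
            rankOne ((Ring.inverse (A + t ^ ((4:ℝ)/3) • 1)) ψ) := by
  have hA' : IsStrictlyPositive A := isStrictlyPositive_of_smul_one_le hc hAc
  have hT' : IsStrictlyPositive T := isStrictlyPositive_of_smul_one_le hc' hTc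
  obtain ⟨hpos, hint, heq⟩ :=
    inv_fourth_root_rank_one_perturbation_general hA' hT' hT (p := 4 / 3) (by norm_num)
  refine ⟨fun t ht ↦ (Complex.pos_iff.1 (hpos t ht)).symm.imp_left Eq.symm, hint, ?_⟩
  rw [sqrt_sqrt_ringInverse hA', sqrt_sqrt_ringInverse hT', mul_div_right_comm,
    ← four_thirds_mul_sin_div_pi]
  convert heq using 2 <;> norm_num
end

section
/- Let H be a complex Hilbert space, A a bounded self-adjoint operator on H with A ≥ Id, ψ ∈ H and α ≥ 0, and set T_α = A + α|ψ⟩⟨ψ|. Then for every Hilbert (orthonormal) basis (e_i) of H, the family of nonnegative real numbers ⟨e_i, (T_α^{1/2} − A^{1/2}) e_i⟩ is summable and ∑_i ⟨e_i, (T_α^{1/2} − A^{1/2}) e_i⟩ = (2α/π) ∫₀^∞ t² ‖(A + t²)⁻¹ψ‖² / (1 + α⟨ψ, (A + t²)⁻¹ψ⟩) dt, and this quantity is finite. -/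
open scoped InnerProductSpace
open MeasureTheory
set_option synthInstance.maxHeartbeats 1000000
set_option maxHeartbeats 1000000

/-!
Write `R(t) = (A + t²)⁻¹`. Since `√x = (2/π) ∫₀^∞ x / (x + t²) dt` and `A R(t) = 1 - t² R(t)`, the
functional calculus gives `√T - √A = (2/π) ∫₀^∞ t² ((A + t²)⁻¹ - (T + t²)⁻¹) dt`. By the
Sherman–Morrison formula `t² ((A + t²)⁻¹ - (T + t²)⁻¹) = α |g(t)⟩⟨g(t)|`, where `g(t)` is a
multiple of `R(t)ψ` whose squared norm is the integrand of the trace formula. The trace of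
`∫ |g(t)⟩⟨g(t)| dt` is `∫ ‖g(t)‖² dt` by Parseval. The basis may be uncountable, but `g` is strongly
measurable and so has separable range, which only countably many basis vectors fail to annihilate;
hence sum and integral can be interchanged. Integrability of `‖g‖²` follows from `‖t² R(t)‖ ≤ 1` for
large `t`, and for bounded `t` from either a positive lower bound of `A` or the term `α⟨ψ, R(t)ψ⟩`
in the denominator.
-/

open scoped Ring

section Scalar

lemma integral_Ioi_div_add_sq {x : ℝ} (hx : 0 ≤ x) :
    ∫ t in Set.Ioi (0 : ℝ), x / (x + t ^ 2) = Real.pi / 2 * √x := by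
  obtain rfl | hx := hx.eq_or_lt
  · simp
  have h_scale := integral_comp_mul_left_Ioi (fun y : ℝ => (1 + y ^ 2)⁻¹) 0
    (b := (√x)⁻¹) (by positivity)
  simp only [mul_zero, integral_Ioi_inv_one_add_sq, Real.arctan_zero, sub_zero, inv_inv,
    smul_eq_mul] at h_scale
  rw [mul_comm, ← h_scale]
  refine integral_congr_ae (.of_forall fun t => ?_)
  simp only [mul_pow, inv_pow, Real.sq_sqrt hx.le]
  field_simp

lemma div_add_sq_le_mul_inv_one_add_sq {x M : ℝ} (hx : 0 ≤ x) (hxM : x ≤ M) (t : ℝ) :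
    x / (x + t ^ 2) ≤ (M + 1) * (1 + t ^ 2)⁻¹ := by
  obtain rfl | hx := hx.eq_or_lt
  · simp only [zero_div]; positivity
  rw [← div_eq_mul_inv, div_le_div_iff₀ (by positivity) (by positivity)]
  nlinarith [mul_nonneg (sub_nonneg.2 hxM) (sq_nonneg t), mul_nonneg (hx.le.trans hxM) hx.le,
    sq_nonneg t]

end Scalar

section CStarAlgebra

variable {𝒜 : Type*} [CStarAlgebra 𝒜] [PartialOrder 𝒜] [StarOrderedRing 𝒜] {a b : 𝒜}

lemma ringInverse_nonneg (ha : 0 ≤ a) : 0 ≤ a⁻¹ʳ := by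
  by_cases hu : IsUnit a
  · exact (IsStrictlyPositive.ringInverse ⟨ha, hu⟩).nonneg
  · exact (Ring.inverse_non_unit a hu).ge

lemma isUnit_add_sq_smul_one (ha : 0 ≤ a) {t : ℝ} (ht : t ≠ 0) :
    IsUnit (a + t ^ 2 • (1 : 𝒜)) :=
  CStarAlgebra.isUnit_of_le (t ^ 2 • (1 : 𝒜)) (le_add_of_nonneg_left ha)
    (IsStrictlyPositive.smul (by positivity) isStrictlyPositive_one)

lemma continuousOn_ringInverse_add_sq_smul_one (ha : 0 ≤ a) :
    ContinuousOn (fun t : ℝ => (a + t ^ 2 • (1 : 𝒜))⁻¹ʳ) (Set.Ioi 0) :=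
  fun t ht => by
  obtain ⟨u, hu⟩ := isUnit_add_sq_smul_one ha (Set.mem_Ioi.1 ht).ne'
  exact (ContinuousAt.comp (f := fun t : ℝ => a + t ^ 2 • (1 : 𝒜)) (x := t)
    (hu ▸ NormedRing.inverse_continuousAt u) (by fun_prop)).continuousWithinAt

lemma mul_ringInverse_add_sq_smul_one (ha : 0 ≤ a) {t : ℝ} (ht : t ≠ 0) :
    a * (a + t ^ 2 • 1)⁻¹ʳ = 1 - t ^ 2 • (a + t ^ 2 • 1)⁻¹ʳ := by
  rw [eq_sub_iff_add_eq, ← smul_one_mul (t ^ 2) (a + t ^ 2 • 1)⁻¹ʳ, ← add_mul,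
    Ring.mul_inverse_cancel _ (isUnit_add_sq_smul_one ha ht)]

lemma cfc_div_add_sq (ha : 0 ≤ a) {t : ℝ} (ht : t ≠ 0) :
    cfc (fun x : ℝ => x / (x + t ^ 2)) a = a * (a + t ^ 2 • 1)⁻¹ʳ := by
  have h_ne : ∀ x ∈ spectrum ℝ a, x + t ^ 2 ≠ 0 := fun x hx => by
    have := spectrum_nonneg_of_nonneg ha hx
    positivity
  rw [cfc_map_div (fun x : ℝ => x) (fun x => x + t ^ 2) a h_ne, cfc_id' ℝ a,
    cfc_add_const _ _ a, cfc_id' ℝ a, Algebra.algebraMap_eq_smul_one]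

lemma integrableOn_and_integral_mul_ringInverse_add_sq (ha : 0 ≤ a) :
    IntegrableOn (fun t : ℝ => a * (a + t ^ 2 • 1)⁻¹ʳ) (Set.Ioi 0) ∧
      ∫ t in Set.Ioi (0 : ℝ), a * (a + t ^ 2 • 1)⁻¹ʳ = (Real.pi / 2) • CFC.sqrt a := by
  have h_cont : ContinuousOn (Function.uncurry fun t x : ℝ => x / (x + t ^ 2))
      (Set.Ioi 0 ×ˢ spectrum ℝ a) := by
    refine ContinuousOn.div (by fun_prop) (by fun_prop) fun p hp => ?_
    have := spectrum_nonneg_of_nonneg ha hp.2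
    have : 0 < p.1 := hp.1
    positivity
  have h_bound : ∀ᵐ t : ℝ ∂volume.restrict (Set.Ioi 0), ∀ x ∈ spectrum ℝ a,
      ‖x / (x + t ^ 2)‖ ≤ (‖a‖ * ‖(1 : 𝒜)‖ + 1) * (1 + t ^ 2)⁻¹ := by
    refine .of_forall fun t x hx => ?_
    have h_nonneg : 0 ≤ x := spectrum_nonneg_of_nonneg ha hx
    rw [Real.norm_of_nonneg (by positivity)]
    exact div_add_sq_le_mul_inv_one_add_sq h_nonneg
      ((le_abs_self x).trans (spectrum.norm_le_norm_mul_of_mem hx)) t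
  have h_finite : HasFiniteIntegral (fun t : ℝ => (‖a‖ * ‖(1 : 𝒜)‖ + 1) * (1 + t ^ 2)⁻¹)
      (volume.restrict (Set.Ioi 0)) := (integrable_inv_one_add_sq.const_mul _).integrableOn.2
  have h_cfc : Set.EqOn (fun t : ℝ => cfc (fun x : ℝ => x / (x + t ^ 2)) a)
      (fun t => a * (a + t ^ 2 • 1)⁻¹ʳ) (Set.Ioi 0) := fun t ht =>
    cfc_div_add_sq ha (Set.mem_Ioi.1 ht).ne'
  refine ⟨(integrableOn_cfc measurableSet_Ioi _ _ a h_cont h_bound h_finite).congr_fun h_cfc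
    measurableSet_Ioi, ?_⟩
  rw [← setIntegral_congr_fun measurableSet_Ioi h_cfc,
    ← cfc_setIntegral measurableSet_Ioi _ _ a h_cont h_bound h_finite,
    CFC.sqrt_eq_real_sqrt a, cfcₙ_eq_cfc, ← cfc_const_mul _ _ _]
  exact cfc_congr fun x hx => integral_Ioi_div_add_sq (spectrum_nonneg_of_nonneg ha hx)

lemma integral_sq_smul_ringInverse_sub_ringInverse (ha : 0 ≤ a) (hb : 0 ≤ b) :
    ∫ t in Set.Ioi (0 : ℝ), t ^ 2 • ((a + t ^ 2 • 1)⁻¹ʳ - (b + t ^ 2 • 1)⁻¹ʳ) =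
      (Real.pi / 2) • (CFC.sqrt b - CFC.sqrt a) := by
  obtain ⟨ha_int, ha_eq⟩ := integrableOn_and_integral_mul_ringInverse_add_sq ha
  obtain ⟨hb_int, hb_eq⟩ := integrableOn_and_integral_mul_ringInverse_add_sq hb
  rw [smul_sub, ← ha_eq, ← hb_eq, ← integral_sub hb_int ha_int]
  refine setIntegral_congr_fun measurableSet_Ioi fun t ht => ?_
  have ht0 : t ≠ 0 := (Set.mem_Ioi.1 ht).ne'
  simp only [mul_ringInverse_add_sq_smul_one ha ht0, mul_ringInverse_add_sq_smul_one hb ht0,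
    smul_sub]
  abel

end CStarAlgebra

section ShermanMorrison

variable {𝕜 E : Type*} [Field 𝕜] [TopologicalSpace 𝕜] [AddCommGroup E] [TopologicalSpace E]
  [IsTopologicalAddGroup E] [Module 𝕜 E] [ContinuousSMul 𝕜 E]

lemma ringInverse_add_smulRight {B : E →L[𝕜] E} (hB : IsUnit B) (f : E →L[𝕜] 𝕜) (v : E)
    (hf : 1 + f (B⁻¹ʳ v) ≠ 0) :
    (B + f.smulRight v)⁻¹ʳ =
      B⁻¹ʳ - (1 + f (B⁻¹ʳ v))⁻¹ • (f ∘L B⁻¹ʳ).smulRight (B⁻¹ʳ v) := by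
  have h_right : ∀ x, B (B⁻¹ʳ x) = x := DFunLike.congr_fun (Ring.mul_inverse_cancel B hB)
  have h_left : ∀ x, B⁻¹ʳ (B x) = x := DFunLike.congr_fun (Ring.inverse_mul_cancel B hB)
  refine Ring.inverse_unit ⟨B + f.smulRight v, _, ?_, ?_⟩
  · ext x
    simp only [mul_apply_eq_comp, add_apply, sub_apply, smul_apply,
      ContinuousLinearMap.smulRight_apply, ContinuousLinearMap.comp_apply, map_sub, map_smul,
      h_right, one_apply_eq_self]
    match_scalars <;> field_simp
    ring
  · ext x
    simp only [mul_apply_eq_comp, add_apply, sub_apply, smul_apply,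
      ContinuousLinearMap.smulRight_apply, ContinuousLinearMap.comp_apply, map_add, map_smul,
      h_left, one_apply_eq_self]
    match_scalars <;> field_simp
    ring

end ShermanMorrison

section InnerProductSpace

variable {𝕜 E ι X : Type*} [RCLike 𝕜] [NormedAddCommGroup E] [InnerProductSpace 𝕜 E]

section Coercive

variable {B : E →L[𝕜] E} {c : ℝ}

lemma mul_norm_ringInverse_apply_sq_le (hB : IsUnit B)
    (hc : ∀ x, c * ‖x‖ ^ 2 ≤ RCLike.re ⟪x, B x⟫_𝕜) (x : E) :
    c * ‖B⁻¹ʳ x‖ ^ 2 ≤ RCLike.re ⟪x, B⁻¹ʳ x⟫_𝕜 := by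
  have h := hc (B⁻¹ʳ x)
  rwa [show B (B⁻¹ʳ x) = x from DFunLike.congr_fun (Ring.mul_inverse_cancel B hB) x,
    inner_re_symm] at h

lemma mul_norm_ringInverse_apply_le (hB : IsUnit B)
    (hc : ∀ x, c * ‖x‖ ^ 2 ≤ RCLike.re ⟪x, B x⟫_𝕜) (x : E) : c * ‖B⁻¹ʳ x‖ ≤ ‖x‖ := by
  obtain h_zero | h_pos := (norm_nonneg (B⁻¹ʳ x)).eq_or_lt
  · simp [← h_zero]
  · refine le_of_mul_le_mul_right ?_ h_pos
    calc c * ‖B⁻¹ʳ x‖ * ‖B⁻¹ʳ x‖ = c * ‖B⁻¹ʳ x‖ ^ 2 := by ring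
      _ ≤ RCLike.re ⟪x, B⁻¹ʳ x⟫_𝕜 := mul_norm_ringInverse_apply_sq_le hB hc x
      _ ≤ ‖x‖ * ‖B⁻¹ʳ x‖ := re_inner_le_norm x _

end Coercive

lemma hasSum_sq_norm_inner (e : HilbertBasis ι 𝕜 E) (x : E) :
    HasSum (fun i => ‖⟪e i, x⟫_𝕜‖ ^ 2) (‖x‖ ^ 2) := by
  have h := RCLike.hasSum_re 𝕜 (e.hasSum_inner_mul_inner x x)
  simpa only [inner_mul_symm_re_eq_norm, ← inner_self_eq_norm_sq (𝕜 := 𝕜) x, norm_mul,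
    norm_inner_symm x, ← sq] using h

variable [MeasurableSpace X] {μ : Measure X} {g : X → E}

lemma exists_countable_forall_notMem_ae_inner_eq_zero (e : HilbertBasis ι 𝕜 E)
    (hg : AEStronglyMeasurable g μ) :
    ∃ S : Set ι, S.Countable ∧ ∀ᵐ x ∂μ, ∀ i ∉ S, ⟪e i, g x⟫_𝕜 = 0 := by
  obtain ⟨D, hD_countable, hD⟩ := hg.stronglyMeasurable_mk.isSeparable_range
  refine ⟨⋃ d ∈ D, Function.support fun i => ‖⟪e i, d⟫_𝕜‖ ^ 2,
    hD_countable.biUnion fun d _ => (hasSum_sq_norm_inner e d).summable.countable_support, ?_⟩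
  filter_upwards [hg.ae_eq_mk] with x hx i hi
  have h_closed : IsClosed {y : E | ⟪e i, y⟫_𝕜 = 0} :=
    isClosed_eq (by fun_prop) continuous_const
  refine h_closed.closure_subset_iff.2 (fun d hd => ?_) (hx ▸ hD (Set.mem_range_self x))
  by_contra h
  exact hi (Set.mem_biUnion hd (by simpa using h))

lemma hasSum_integral_sq_norm_inner (e : HilbertBasis ι 𝕜 E) (hg : MemLp g 2 μ) :
    HasSum (fun i => ∫ x, ‖⟪e i, g x⟫_𝕜‖ ^ 2 ∂μ) (∫ x, ‖g x‖ ^ 2 ∂μ) := by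
  obtain ⟨S, hS_countable, hS⟩ := exists_countable_forall_notMem_ae_inner_eq_zero e hg.1
  have : Countable S := hS_countable.to_subtype
  have h_zero : ∀ i ∉ S, ∫ x, ‖⟪e i, g x⟫_𝕜‖ ^ 2 ∂μ = 0 := fun i hi =>
    integral_eq_zero_of_ae (hS.mono fun x hx => by simp [hx i hi])
  have h_parseval : ∀ᵐ x ∂μ, HasSum (fun i : S => ‖⟪e i, g x⟫_𝕜‖ ^ 2) (‖g x‖ ^ 2) := by
    filter_upwards [hS] with x hx
    refine (hasSum_subtype_iff_of_support_subset fun i hi => ?_).2 (hasSum_sq_norm_inner e (g x))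
    by_contra h
    exact hi (by simp [hx i h])
  rw [← hasSum_subtype_iff_of_support_subset (s := S) fun i hi => by_contra (hi <| h_zero i ·)]
  refine hasSum_integral_of_dominated_convergence (fun i x => ‖⟪e i, g x⟫_𝕜‖ ^ 2)
    (fun i => (hg.1.const_inner.norm.pow 2)) (fun i => .of_forall fun x => by simp)
    (h_parseval.mono fun x hx => hx.summable) ?_ h_parseval
  refine ((memLp_two_iff_integrable_sq_norm hg.1).1 hg).congr ?_
  exact h_parseval.mono fun x hx => hx.tsum_eq.symm

end InnerProductSpace

section RankOne

variable {H ι X : Type*} [NormedAddCommGroup H] [InnerProductSpace ℂ H]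

lemma rankOne_eq (ψ : H) : rankOne ψ = InnerProductSpace.rankOne ℂ ψ ψ := rfl

lemma rankOne_nonneg (ψ : H) : 0 ≤ rankOne ψ := by
  rw [ContinuousLinearMap.nonneg_iff_isPositive, rankOne_eq]
  exact InnerProductSpace.isPositive_rankOne_self ψ

lemma rankOne_real_smul (c : ℝ) (ψ : H) : rankOne (c • ψ) = c ^ 2 • rankOne ψ := by
  simp only [rankOne_eq, ← Complex.coe_smul, map_smul, map_smulₛₗ, smul_apply,
    Complex.conj_ofReal, smul_smul, sq, Complex.ofReal_mul]

lemma re_inner_rankOne_apply (ψ v : H) : (⟪v, rankOne ψ v⟫_ℂ).re = ‖⟪v, ψ⟫_ℂ‖ ^ 2 := by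
  rw [rankOne_eq, InnerProductSpace.rankOne_apply, inner_smul_right, mul_comm,
    ← RCLike.re_eq_complex_re, inner_mul_symm_re_eq_norm, norm_mul, norm_inner_symm ψ v, sq]

section SelfAdjoint

variable [CompleteSpace H] {B : H →L[ℂ] H} {ψ : H} {α : ℝ}

lemma ofReal_re_inner_apply (hB : IsSelfAdjoint B) (x : H) :
    ((⟪x, B x⟫_ℂ).re : ℂ) = ⟪x, B x⟫_ℂ :=
  (ContinuousLinearMap.isSelfAdjoint_iff_isSymmetric.1 hB).coe_re_inner_self_apply x

lemma ringInverse_add_smul_rankOne (hB : IsUnit B) (hB_self : IsSelfAdjoint B)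
    (hψ : 1 + α * (⟪ψ, B⁻¹ʳ ψ⟫_ℂ).re ≠ 0) :
    (B + α • rankOne ψ)⁻¹ʳ =
      B⁻¹ʳ - (α / (1 + α * (⟪ψ, B⁻¹ʳ ψ⟫_ℂ).re)) • rankOne (B⁻¹ʳ ψ) := by
  have h_symm := ContinuousLinearMap.isSelfAdjoint_iff_isSymmetric.1 hB_self.ringInverse
  have h_coeff : 1 + (α • innerSL ℂ ψ) (B⁻¹ʳ ψ) = ((1 + α * (⟪ψ, B⁻¹ʳ ψ⟫_ℂ).re : ℝ) : ℂ) := by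
    rw [Complex.ofReal_add, Complex.ofReal_mul, Complex.ofReal_one,
      ofReal_re_inner_apply hB_self.ringInverse, smul_apply, innerSL_apply_apply, Complex.real_smul]
  have h_adjoint : (α • innerSL ℂ ψ) ∘L B⁻¹ʳ = α • innerSL ℂ (B⁻¹ʳ ψ) := by
    ext x
    exact congrArg (α • ·) (h_symm ψ x).symm
  have h_smul : ∀ φ : H, (α • innerSL ℂ φ).smulRight φ = α • rankOne φ := fun φ => by
    ext x
    exact smul_assoc α ⟪φ, x⟫_ℂ φ
  rw [← h_smul, ringInverse_add_smulRight hB _ _ (h_coeff ▸ Complex.ofReal_ne_zero.2 hψ), h_coeff,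
    h_adjoint, h_smul, ← Complex.ofReal_inv, Complex.coe_smul, smul_smul, inv_mul_eq_div]

end SelfAdjoint

variable [MeasurableSpace X] {μ : Measure X} {g : X → H}

lemma integrable_rankOne (hg : MemLp g 2 μ) : Integrable (fun x => rankOne (g x)) μ := by
  have h_cont : Continuous (rankOne : H → H →L[ℂ] H) :=
    ((ContinuousLinearMap.smulRightL ℂ H H).continuous.comp (innerSL ℂ).continuous).clm_apply
      continuous_id
  refine ((memLp_two_iff_integrable_sq_norm hg.1).1 hg).mono'
    (h_cont.comp_aestronglyMeasurable hg.1) (.of_forall fun x => ?_)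
  rw [rankOne_eq, InnerProductSpace.norm_rankOne, sq]

lemma hasSum_re_inner_integral_rankOne [CompleteSpace H] (e : HilbertBasis ι ℂ H)
    (hg : MemLp g 2 μ) :
    HasSum (fun i => (⟪e i, (∫ x, rankOne (g x) ∂μ) (e i)⟫_ℂ).re) (∫ x, ‖g x‖ ^ 2 ∂μ) := by
  convert hasSum_integral_sq_norm_inner e hg with i
  have h_int := integrable_rankOne hg
  have h_int_apply := h_int.apply_continuousLinearMap (e i)
  rw [ContinuousLinearMap.integral_apply h_int, ← integral_inner h_int_apply,
    ← RCLike.re_eq_complex_re, ← integral_re (h_int_apply.const_inner _)]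
  simp only [RCLike.re_eq_complex_re, re_inner_rankOne_apply]

end RankOne

section Perturbation

variable {H : Type*} [NormedAddCommGroup H] [InnerProductSpace ℂ H]
  {A : H →L[ℂ] H} {ψ : H} {α t : ℝ}

/-- The vector `g(t) = t (1 + α⟨ψ, (A + t²)⁻¹ψ⟩)^{-1/2} (A + t²)⁻¹ψ`, normalized so that, for
`T = A + α|ψ⟩⟨ψ|`, one has `t² ((A + t²)⁻¹ - (T + t²)⁻¹) = α|g(t)⟩⟨g(t)|`. -/
noncomputable def resolventDiffVector (A : H →L[ℂ] H) (ψ : H) (α t : ℝ) : H :=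
  (t / √(1 + α * (⟪ψ, (A + t ^ 2 • 1)⁻¹ʳ ψ⟫_ℂ).re)) • (A + t ^ 2 • 1)⁻¹ʳ ψ

lemma add_sq_mul_norm_sq_le_re_inner {c : ℝ} (hc : c • (1 : H →L[ℂ] H) ≤ A) (t : ℝ) (x : H) :
    (c + t ^ 2) * ‖x‖ ^ 2 ≤ (⟪x, (A + t ^ 2 • (1 : H →L[ℂ] H)) x⟫_ℂ).re := by
  have h := ((ContinuousLinearMap.le_def _ _).1 hc).re_inner_nonneg_right x
  have h_self : (⟪x, x⟫_ℂ).re = ‖x‖ ^ 2 := inner_self_eq_norm_sq (𝕜 := ℂ) x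
  simp only [add_apply, sub_apply, smul_apply, one_apply_eq_self, inner_add_right,
    inner_sub_right, ← Complex.coe_smul, inner_smul_right, RCLike.re_eq_complex_re,
    Complex.add_re, Complex.sub_re, Complex.re_ofReal_mul, h_self] at h ⊢
  linarith

variable [CompleteSpace H]

lemma ringInverse_add_sq_smul_one_nonneg (hA : 0 ≤ A) (t : ℝ) :
    0 ≤ (A + t ^ 2 • (1 : H →L[ℂ] H))⁻¹ʳ :=
  ringInverse_nonneg (add_nonneg hA (smul_nonneg (sq_nonneg t) zero_le_one))

lemma one_le_one_add_mul_re_inner_ringInverse (hA : 0 ≤ A) (hα : 0 ≤ α) (ψ : H) (t : ℝ) :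
    1 ≤ 1 + α * (⟪ψ, (A + t ^ 2 • 1)⁻¹ʳ ψ⟫_ℂ).re :=
  le_add_of_nonneg_right <| mul_nonneg hα <|
    ((ContinuousLinearMap.nonneg_iff_isPositive _).1
      (ringInverse_add_sq_smul_one_nonneg hA t)).re_inner_nonneg_right ψ

lemma norm_sq_resolventDiffVector (hA : 0 ≤ A) (hα : 0 ≤ α) (ψ : H) (t : ℝ) :
    ‖resolventDiffVector A ψ α t‖ ^ 2 = t ^ 2 * ‖(A + t ^ 2 • 1)⁻¹ʳ ψ‖ ^ 2 /
      (1 + α * (⟪ψ, (A + t ^ 2 • 1)⁻¹ʳ ψ⟫_ℂ).re) := by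
  have h := one_le_one_add_mul_re_inner_ringInverse hA hα ψ t
  rw [resolventDiffVector, norm_smul, mul_pow, Real.norm_eq_abs, sq_abs, div_pow,
    Real.sq_sqrt (zero_le_one.trans h), div_mul_eq_mul_div]

lemma sq_smul_ringInverse_sub_ringInverse (hA : 0 ≤ A) (hα : 0 ≤ α) (ht : t ≠ 0) :
    t ^ 2 • ((A + t ^ 2 • 1)⁻¹ʳ - (A + α • rankOne ψ + t ^ 2 • 1)⁻¹ʳ) =
      α • rankOne (resolventDiffVector A ψ α t) := by
  have h_self : IsSelfAdjoint (A + t ^ 2 • (1 : H →L[ℂ] H)) :=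
    .of_nonneg (add_nonneg hA (smul_nonneg (sq_nonneg t) zero_le_one))
  have h_pos := zero_lt_one.trans_le (one_le_one_add_mul_re_inner_ringInverse hA hα ψ t)
  rw [resolventDiffVector, rankOne_real_smul, div_pow, Real.sq_sqrt h_pos.le, add_right_comm,
    ringInverse_add_smul_rankOne (isUnit_add_sq_smul_one hA ht) h_self h_pos.ne', sub_sub_cancel,
    smul_smul, smul_smul, mul_div_left_comm]

lemma sqrt_sub_sqrt_eq_integral_rankOne (hA : 0 ≤ A) (hα : 0 ≤ α) (ψ : H) :
    CFC.sqrt (A + α • rankOne ψ) - CFC.sqrt A =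
      (2 * α / Real.pi) • ∫ t in Set.Ioi (0 : ℝ), rankOne (resolventDiffVector A ψ α t) := by
  have hT : 0 ≤ A + α • rankOne ψ := add_nonneg hA (smul_nonneg hα (rankOne_nonneg ψ))
  have h_sqrt := integral_sq_smul_ringInverse_sub_ringInverse hA hT
  rw [setIntegral_congr_fun measurableSet_Ioi fun t ht =>
    sq_smul_ringInverse_sub_ringInverse hA hα (Set.mem_Ioi.1 ht).ne', integral_smul] at h_sqrt
  rw [mul_div_right_comm, mul_smul, h_sqrt, smul_smul, div_mul_div_cancel₀ Real.pi_ne_zero,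
    div_self two_ne_zero, one_smul]

lemma continuousOn_resolventDiffVector (hA : 0 ≤ A) (hα : 0 ≤ α) (ψ : H) :
    ContinuousOn (resolventDiffVector A ψ α) (Set.Ioi 0) := by
  have h_inv : ContinuousOn (fun t : ℝ => (A + t ^ 2 • 1)⁻¹ʳ ψ) (Set.Ioi 0) :=
    (continuousOn_ringInverse_add_sq_smul_one hA).clm_apply continuousOn_const
  have h_re : ContinuousOn (fun t : ℝ => (⟪ψ, (A + t ^ 2 • 1)⁻¹ʳ ψ⟫_ℂ).re) (Set.Ioi 0) :=
    Complex.continuous_re.comp_continuousOn (continuousOn_const.inner h_inv)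
  refine (continuousOn_id.div (continuousOn_const.add (continuousOn_const.mul h_re)).sqrt
    fun t _ => ?_).smul h_inv
  exact (Real.sqrt_pos.2 <| zero_lt_one.trans_le <|
    one_le_one_add_mul_re_inner_ringInverse hA hα ψ t).ne'

lemma add_sq_mul_norm_ringInverse_apply_le {c : ℝ} (hA : 0 ≤ A) (hc : c • (1 : H →L[ℂ] H) ≤ A)
    (ht : t ≠ 0) (x : H) : (c + t ^ 2) * ‖(A + t ^ 2 • 1)⁻¹ʳ x‖ ≤ ‖x‖ :=
  mul_norm_ringInverse_apply_le (isUnit_add_sq_smul_one hA ht)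
    (add_sq_mul_norm_sq_le_re_inner hc t) x

lemma norm_sq_resolventDiffVector_le (hA : 0 ≤ A) (hα : 0 ≤ α) (ψ : H) (t : ℝ) :
    ‖resolventDiffVector A ψ α t‖ ^ 2 ≤ t ^ 2 * ‖(A + t ^ 2 • 1)⁻¹ʳ ψ‖ ^ 2 := by
  rw [norm_sq_resolventDiffVector hA hα]
  exact div_le_self (by positivity) (one_le_one_add_mul_re_inner_ringInverse hA hα ψ t)

lemma sq_mul_norm_sq_resolventDiffVector_le (hA : 0 ≤ A) (hα : 0 ≤ α) (ψ : H) (ht : t ≠ 0) :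
    t ^ 2 * ‖resolventDiffVector A ψ α t‖ ^ 2 ≤ ‖ψ‖ ^ 2 := by
  have h_resolvent : t ^ 2 * ‖(A + t ^ 2 • 1)⁻¹ʳ ψ‖ ≤ ‖ψ‖ := by
    simpa using add_sq_mul_norm_ringInverse_apply_le hA ((zero_smul ℝ 1).trans_le hA) ht ψ
  calc t ^ 2 * ‖resolventDiffVector A ψ α t‖ ^ 2
      ≤ t ^ 2 * (t ^ 2 * ‖(A + t ^ 2 • 1)⁻¹ʳ ψ‖ ^ 2) := by
        gcongr
        exact norm_sq_resolventDiffVector_le hA hα ψ t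
    _ = (t ^ 2 * ‖(A + t ^ 2 • 1)⁻¹ʳ ψ‖) ^ 2 := by ring
    _ ≤ ‖ψ‖ ^ 2 := by gcongr

lemma norm_sq_resolventDiffVector_le_div {c : ℝ} (hc : 0 < c) (hcA : c • (1 : H →L[ℂ] H) ≤ A)
    (hα : 0 ≤ α) (ψ : H) (ht : t ≠ 0) :
    ‖resolventDiffVector A ψ α t‖ ^ 2 ≤ ‖ψ‖ ^ 2 / c := by
  have hA : 0 ≤ A := (smul_nonneg hc.le zero_le_one).trans hcA
  have h_resolvent := add_sq_mul_norm_ringInverse_apply_le hA hcA ht ψ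
  rw [le_div_iff₀' hc]
  calc c * ‖resolventDiffVector A ψ α t‖ ^ 2
      ≤ c * (t ^ 2 * ‖(A + t ^ 2 • 1)⁻¹ʳ ψ‖ ^ 2) := by
        gcongr
        exact norm_sq_resolventDiffVector_le hA hα ψ t
    _ = (c * t ^ 2) * ‖(A + t ^ 2 • 1)⁻¹ʳ ψ‖ ^ 2 := by ring
    _ ≤ (c + t ^ 2) ^ 2 * ‖(A + t ^ 2 • 1)⁻¹ʳ ψ‖ ^ 2 := by
        gcongr
        nlinarith [mul_nonneg hc.le (sq_nonneg t), sq_nonneg c, sq_nonneg (t ^ 2)]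
    _ = ((c + t ^ 2) * ‖(A + t ^ 2 • 1)⁻¹ʳ ψ‖) ^ 2 := by ring
    _ ≤ ‖ψ‖ ^ 2 := by gcongr

lemma norm_sq_resolventDiffVector_le_inv (hA : 0 ≤ A) (hα : 0 < α) (ψ : H) (ht : t ≠ 0) :
    ‖resolventDiffVector A ψ α t‖ ^ 2 ≤ α⁻¹ := by
  have h_pos := zero_lt_one.trans_le (one_le_one_add_mul_re_inner_ringInverse hA hα.le ψ t)
  have h_resolvent : t ^ 2 * ‖(A + t ^ 2 • 1)⁻¹ʳ ψ‖ ^ 2 ≤ (⟪ψ, (A + t ^ 2 • 1)⁻¹ʳ ψ⟫_ℂ).re :=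
    mul_norm_ringInverse_apply_sq_le (isUnit_add_sq_smul_one hA ht)
      (fun x => by
        simpa only [zero_add, RCLike.re_eq_complex_re] using
          add_sq_mul_norm_sq_le_re_inner ((zero_smul ℝ 1).trans_le hA) t x) ψ
  rw [norm_sq_resolventDiffVector hA hα.le, div_le_iff₀ h_pos, mul_add, inv_mul_cancel_left₀ hα.ne']
  linarith [inv_pos.2 hα]

lemma exists_norm_sq_resolventDiffVector_le (hA : 0 ≤ A) (hα : 0 ≤ α) (h : IsUnit A ∨ 0 < α)
    (ψ : H) : ∃ C, ∀ t ≠ 0, ‖resolventDiffVector A ψ α t‖ ^ 2 ≤ C := by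
  obtain hA_unit | hα := h
  · obtain _ | _ := subsingleton_or_nontrivial H
    · exact ⟨0, fun t _ => by simp [Subsingleton.elim (resolventDiffVector A ψ α t) 0]⟩
    obtain ⟨c, hc, hcA⟩ := (CFC.exists_pos_algebraMap_le_iff (.of_nonneg hA)).2 fun x hx =>
      (spectrum_nonneg_of_nonneg hA hx).lt_of_ne fun h0 =>
        spectrum.zero_notMem ℝ hA_unit (h0 ▸ hx)
    rw [Algebra.algebraMap_eq_smul_one] at hcA
    exact ⟨‖ψ‖ ^ 2 / c, fun t => norm_sq_resolventDiffVector_le_div hc hcA hα ψ⟩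
  · exact ⟨α⁻¹, fun t => norm_sq_resolventDiffVector_le_inv hA hα ψ⟩

lemma memLp_resolventDiffVector (hA : 0 ≤ A) (hα : 0 ≤ α) (h : IsUnit A ∨ 0 < α) (ψ : H) :
    MemLp (resolventDiffVector A ψ α) 2 (volume.restrict (Set.Ioi 0)) := by
  obtain ⟨C, hC⟩ := exists_norm_sq_resolventDiffVector_le hA hα h ψ
  have h_meas :=
    (continuousOn_resolventDiffVector hA hα ψ).aestronglyMeasurable (μ := volume) measurableSet_Ioi
  refine (memLp_two_iff_integrable_sq_norm h_meas).2 <|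
    (integrable_inv_one_add_sq.const_mul (C + ‖ψ‖ ^ 2)).integrableOn.mono' (h_meas.norm.pow 2) ?_
  filter_upwards [ae_restrict_mem measurableSet_Ioi] with t ht
  have ht0 : t ≠ 0 := (Set.mem_Ioi.1 ht).ne'
  rw [Real.norm_of_nonneg (by positivity), ← div_eq_mul_inv, le_div_iff₀ (by positivity)]
  linarith [hC t ht0, sq_mul_norm_sq_resolventDiffVector_le hA hα ψ ht0]

end Perturbation

theorem trace_sqrt_rank_one_perturbation_general
    {H : Type*} [NormedAddCommGroup H] [InnerProductSpace ℂ H] [CompleteSpace H]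
    {ι : Type*}
    (A : H →L[ℂ] H) (hA : 0 ≤ A) (ψ : H) (α : ℝ) (hα : 0 ≤ α) (h : IsUnit A ∨ 0 < α)
    (T : H →L[ℂ] H) (hT : T = A + α • rankOne ψ)
    (e : HilbertBasis ι ℂ H) :
    Summable (fun i => (⟪e i, (CFC.sqrt T - CFC.sqrt A) (e i)⟫_ℂ).re) ∧
    IntegrableOn (fun t : ℝ =>
        t ^ 2 * ‖(A + t ^ 2 • 1)⁻¹ʳ ψ‖ ^ 2 /
          (1 + α * (⟪ψ, (A + t ^ 2 • 1)⁻¹ʳ ψ⟫_ℂ).re)) (Set.Ioi 0) ∧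
    ∑' i, (⟪e i, (CFC.sqrt T - CFC.sqrt A) (e i)⟫_ℂ).re =
      (2 * α / Real.pi) * ∫ t in Set.Ioi (0 : ℝ),
        t ^ 2 * ‖(A + t ^ 2 • 1)⁻¹ʳ ψ‖ ^ 2 /
          (1 + α * (⟪ψ, (A + t ^ 2 • 1)⁻¹ʳ ψ⟫_ℂ).re) := by
  have hg := memLp_resolventDiffVector hA hα h ψ
  have h_trace : HasSum (fun i => (⟪e i, (CFC.sqrt T - CFC.sqrt A) (e i)⟫_ℂ).re)
      ((2 * α / Real.pi) * ∫ t in Set.Ioi (0 : ℝ), ‖resolventDiffVector A ψ α t‖ ^ 2) := by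
    rw [hT, sqrt_sub_sqrt_eq_integral_rankOne hA hα]
    simpa only [smul_apply, ← Complex.coe_smul, inner_smul_right, Complex.re_ofReal_mul] using
      (hasSum_re_inner_integral_rankOne e hg).mul_left (2 * α / Real.pi)
  simp only [← norm_sq_resolventDiffVector hA hα]
  exact ⟨h_trace.summable, (memLp_two_iff_integrable_sq_norm hg.1).1 hg, h_trace.tsum_eq⟩

/-- Trace formula for the square root of a rank-one perturbation: if `A ≥ Id`,
`α ≥ 0` and `T = A + α|ψ⟩⟨ψ|`, then for every Hilbert basis `(e i)` the family of
nonnegative reals `⟨e i, (T^{1/2} − A^{1/2}) e i⟩` is summable, the real integrand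
is integrable on `(0,∞)` (so the right-hand side is finite), and
`∑ᵢ ⟨e i, (T^{1/2} − A^{1/2}) e i⟩ = (2α/π) ∫₀^∞ t²‖(A+t²)⁻¹ψ‖²/(1 + α⟨ψ,(A+t²)⁻¹ψ⟩) dt`. -/
theorem trace_sqrt_rank_one_perturbation
    {H : Type*} [NormedAddCommGroup H] [InnerProductSpace ℂ H] [CompleteSpace H]
    {ι : Type*}
    (A : H →L[ℂ] H) (hA : IsSelfAdjoint A) (hA1 : (1 : H →L[ℂ] H) ≤ A)
    (ψ : H) (α : ℝ) (hα : 0 ≤ α)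
    (T : H →L[ℂ] H) (hT : T = A + α • rankOne ψ)
    (e : HilbertBasis ι ℂ H) :
    Summable (fun i => (⟪e i, (CFC.sqrt T - CFC.sqrt A) (e i)⟫_ℂ).re) ∧
    IntegrableOn (fun t : ℝ =>
        t ^ 2 * ‖(Ring.inverse (A + t ^ 2 • 1)) ψ‖ ^ 2 /
          (1 + α * (⟪ψ, (Ring.inverse (A + t ^ 2 • 1)) ψ⟫_ℂ).re)) (Set.Ioi 0) ∧
    ∑' i, (⟪e i, (CFC.sqrt T - CFC.sqrt A) (e i)⟫_ℂ).re =
      (2 * α / Real.pi) * ∫ t in Set.Ioi (0:ℝ),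
        t ^ 2 * ‖(Ring.inverse (A + t ^ 2 • 1)) ψ‖ ^ 2 /
          (1 + α * (⟪ψ, (Ring.inverse (A + t ^ 2 • 1)) ψ⟫_ℂ).re) :=
  trace_sqrt_rank_one_perturbation_general A (zero_le_one.trans hA1) ψ α hα
    (.inl (CStarAlgebra.isUnit_of_le 1 hA1)) T hT e
end
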